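/- Let J be a finite nonempty index set and let n : J → ℕ be observation counts with total N = ∑_{j ∈ J} n_j > 0. Over all probability vectors p : J → ℝ (i.e., p_j ≥ 0 for all j and ∑_{j ∈ J} p_j = 1), the multinomial likelihood L(p) = ∏_{j ∈ J} p_j^{n_j} (with the convention 0^0 = 1) attains its maximum at the empirical frequency vector p̂ given by p̂_j = n_j / N; that is, for every probability vector p, ∏_{j ∈ J} p_j^{n_j} ≤ ∏_{j ∈ J} (n_j / N)^{n_j}. -/

import Mathlib

/-- The empirical frequency vector `p̂ j = n j / N` maximizes the multinomial
likelihood `∏ j, p j ^ n j` over all probability vectors `p`. -/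
theorem multinomial_mle {J : Type*} [Fintype J] [Nonempty J]
    (n : J → ℕ) (hN : 0 < ∑ j, n j)
    (p : J → ℝ) (hp : ∀ j, 0 ≤ p j) (hpsum : ∑ j, p j = 1) :
    ∏ j, p j ^ n j ≤ ∏ j, ((n j : ℝ) / ((∑ l, n l : ℕ) : ℝ)) ^ n j := by
  have hs : ∑ j, (n j : ℝ) = ((∑ l, n l : ℕ) : ℝ) := by push_cast; rfl
  have hN' : (0 : ℝ) < ((∑ l, n l : ℕ) : ℝ) := by exact_mod_cast hN
  generalize ((∑ l, n l : ℕ) : ℝ) = N at hs hN'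
  have key : ∀ j, p j ^ n j ≤ ((n j : ℝ) / N) ^ n j * Real.exp (N * p j - n j) := by
    intro j
    rcases Nat.eq_zero_or_pos (n j) with h | h
    · simp only [h, pow_zero, one_mul, Nat.cast_zero, sub_zero]
      exact Real.one_le_exp (mul_nonneg hN'.le (hp j))
    · have hn : (0 : ℝ) < n j := by exact_mod_cast h
      have e : Real.exp (N * p j - n j) = Real.exp (N * p j / n j - 1) ^ n j := by
        rw [← Real.exp_nat_mul]
        congr 1
        field_simp
      rw [e, ← mul_pow]
      refine pow_le_pow_left₀ (hp j) ?_ _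
      have h1 := Real.add_one_le_exp (N * p j / n j - 1)
      calc p j = (n j : ℝ) / N * (N * p j / n j - 1 + 1) := by field_simp; ring
        _ ≤ _ := mul_le_mul_of_nonneg_left h1 (by positivity)
  calc ∏ j, p j ^ n j ≤ ∏ j, (((n j : ℝ) / N) ^ n j * Real.exp (N * p j - n j)) :=
        Finset.prod_le_prod (fun j _ => pow_nonneg (hp j) _) (fun j _ => key j)
    _ = _ := by
        rw [Finset.prod_mul_distrib, ← Real.exp_sum, Finset.sum_sub_distrib, ← Finset.mul_sum,
          hpsum, hs]
        simp
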